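/- Let 0 < β₁ < β₂ < ⋯ < βₙ, let v* ≥ 0, and let x ∈ ℝ₊ⁿ satisfy Σ_{j=1}^n x_j > v*. Then the linear function y ↦ Σ_{i=1}^n βᵢ yᵢ has a unique minimizer on the set { y ∈ ℝ₊ⁿ : 0 ≤ yᵢ ≤ xᵢ for all i, Σ_{i=1}^n yᵢ = Σ_{i=1}^n xᵢ − v* }, and this minimizer is y*(x) with components y*ᵢ = min( (Σ_{j=i}^n x_j − v*)₊ , xᵢ ) for i = 1,…,n−1 and y*ₙ = (xₙ − v*)₊. Equivalently, writing i₀ for the index with Σ_{j=i₀+1}^n x_j ≤ v* < Σ_{j=i₀}^n x_j, one has y* = (x₁, …, x_{i₀−1}, Σ_{j=i₀}^n x_j − v*, 0, …, 0). -/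

import Mathlib

open Finset

/-! The cheapest way to spread `Σ xᵢ - v` over the box is to fill coordinates in increasing order of
cost, which leaves one partially filled coordinate `p`. A competitor `y` with the same total differs
from the greedy point by losing mass at indices below `p` and gaining mass at indices above `p`.
Because the totals agree, replacing `β` by `β - β p` does not change the cost difference, and then
every coordinate contributes nonnegatively to it. -/

theorem exists_Ici_eq_Ioi_of_not_isMax {ι : Type*} [LinearOrder ι]
    [LocallyFiniteOrderTop ι] {i : ι} (hi : ¬IsMax i) : ∃ k, i < k ∧ Ici k = Ioi i := by
  have hne : (Ioi i).Nonempty := nonempty_iff_ne_empty.2 (mt Ioi_eq_empty.1 hi)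
  have hmin : i < (Ioi i).min' hne := mem_Ioi.1 (min'_mem _ hne)
  refine ⟨(Ioi i).min' hne, hmin, ?_⟩
  ext j
  rw [mem_Ici, mem_Ioi]
  exact ⟨hmin.trans_le, fun hj => min'_le _ _ (mem_Ioi.2 hj)⟩

theorem exists_ne_of_sum_eq_of_ne {ι M : Type*} [Fintype ι] [AddCommMonoid M]
    [IsRightCancelAdd M] {y z : ι → M} (hsum : ∑ i, y i = ∑ i, z i) (hne : y ≠ z) (p : ι) :
    ∃ i ≠ p, y i ≠ z i := by
  classical
  by_contra! hoff
  have hp : y p = z p := by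
    have hrest : ∑ i ∈ univ.erase p, y i = ∑ i ∈ univ.erase p, z i :=
      sum_congr rfl fun i hi => hoff i (ne_of_mem_erase hi)
    rw [← add_sum_erase univ y (mem_univ p), ← add_sum_erase univ z (mem_univ p), hrest] at hsum
    exact add_right_cancel hsum
  exact hne (funext fun i => (eq_or_ne i p).elim (fun h => h ▸ hp) (hoff i))

theorem sum_mul_lt_sum_mul_of_crossing {ι R : Type*} [Fintype ι] [LinearOrder ι] [Ring R]
    [LinearOrder R] [IsStrictOrderedRing R] {β y z : ι → R} (hβ : StrictMono β)
    (hsum : ∑ i, y i = ∑ i, z i) (hne : y ≠ z) {p : ι} (hbelow : ∀ i < p, y i ≤ z i)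
    (habove : ∀ i, p < i → z i ≤ y i) : ∑ i, β i * z i < ∑ i, β i * y i := by
  have hle (i : ι) : (β i - β p) * z i ≤ (β i - β p) * y i := by
    rcases lt_trichotomy i p with h | rfl | h
    · exact mul_le_mul_of_nonpos_left (hbelow i h) (sub_nonpos.2 (hβ h).le)
    · simp only [sub_self, zero_mul, le_refl]
    · exact mul_le_mul_of_nonneg_left (habove i h) (sub_nonneg.2 (hβ h).le)
  obtain ⟨i, hip, hi⟩ := exists_ne_of_sum_eq_of_ne hsum hne p
  have hlt : (β i - β p) * z i < (β i - β p) * y i :=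
    (hle i).lt_of_ne fun h =>
      hi (mul_left_cancel₀ (sub_ne_zero.2 (hβ.injective.ne hip)) h).symm
  have hshift := sum_lt_sum (fun i _ => hle i) ⟨i, mem_univ i, hlt⟩
  simpa only [sub_mul, sum_sub_distrib, ← mul_sum, hsum, sub_lt_sub_iff_right] using hshift

/-- The feasible set of the linear programme: the box `[0, x]` cut by the hyperplane
`∑ i, y i = ∑ i, x i - v`. -/
def boxSlice {ι G : Type*} [Fintype ι] [AddCommGroup G] [Preorder G] (x : ι → G) (v : G) :
    Set (ι → G) :=
  {y | (∀ i, y i ∈ Set.Icc 0 (x i)) ∧ ∑ i, y i = ∑ i, x i - v}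

section Greedy

variable {ι G : Type*} [LinearOrder ι] [LocallyFiniteOrderTop ι] [AddCommGroup G] [LinearOrder G]
  {x : ι → G} {v : G} {p i : ι}

/-- The point `y*(x)`, obtained from `x` by removing a total mass `v`, starting from the largest
indices. The formula is the one for `i < n` in the paper; by `greedyPoint_of_isMax` it also covers
`i = n`. -/
def greedyPoint (x : ι → G) (v : G) (i : ι) : G :=
  min (max (∑ j ∈ Ici i, x j - v) 0) (x i)

/-- `p` is the critical index `i₀` of the paper, at which the tail sums of `x` cross the level
`v`. -/
def IsPivot (x : ι → G) (v : G) (p : ι) : Prop :=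
  ∑ j ∈ Ioi p, x j ≤ v ∧ v < ∑ j ∈ Ici p, x j

theorem exists_isPivot [Fintype ι] (hv : 0 ≤ v) (hsum : v < ∑ i, x i) : ∃ p, IsPivot x v p := by
  have : Nonempty ι := by
    by_contra! h
    rw [univ_eq_empty, sum_empty] at hsum
    exact hsum.not_ge hv
  obtain ⟨m, hm⟩ := Finite.exists_min fun i : ι => i
  have htail : ∃ i, v < ∑ j ∈ Ici i, x j :=
    ⟨m, by rwa [eq_univ_of_forall fun j => mem_Ici.2 (hm j)]⟩
  obtain ⟨p, hp⟩ := Set.Finite.exists_maximal (Set.toFinite {i | v < ∑ j ∈ Ici i, x j}) htail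
  refine ⟨p, ?_, hp.prop⟩
  by_cases hmax : IsMax p
  · rwa [Ioi_eq_empty.2 hmax, sum_empty]
  · obtain ⟨k, hpk, hk⟩ := exists_Ici_eq_Ioi_of_not_isMax hmax
    exact hk ▸ not_lt.1 (hp.not_prop_of_gt hpk)

theorem greedyPoint_le (x : ι → G) (v : G) (i : ι) : greedyPoint x v i ≤ x i :=
  min_le_right _ _

theorem greedyPoint_nonneg (v : G) (hi : 0 ≤ x i) : 0 ≤ greedyPoint x v i :=
  le_min (le_max_right _ _) hi

variable [IsOrderedAddMonoid G]

theorem greedyPoint_of_isMax (hv : 0 ≤ v) (hx : 0 ≤ x i) (hi : IsMax i) :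
    greedyPoint x v i = max (x i - v) 0 := by
  rw [greedyPoint, ← add_sum_Ioi_eq_sum_Ici, Ioi_eq_empty.2 hi, sum_empty, add_zero]
  exact min_eq_left (max_le (sub_le_self _ hv) hx)

namespace IsPivot

theorem greedyPoint_of_lt (hp : IsPivot x v p) (hx : ∀ i, 0 ≤ x i) (hi : i < p) :
    greedyPoint x v i = x i := by
  have htail : v ≤ ∑ j ∈ Ioi i, x j :=
    hp.2.le.trans <| sum_le_sum_of_subset_of_nonneg
      (fun _ hj => mem_Ioi.2 (hi.trans_le (mem_Ici.1 hj))) fun j _ _ => hx j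
  refine min_eq_right (le_max_of_le_left ?_)
  rw [← add_sum_Ioi_eq_sum_Ici, add_sub_assoc]
  exact le_add_of_nonneg_right (sub_nonneg.2 htail)

theorem greedyPoint_of_gt (hp : IsPivot x v p) (hx : ∀ i, 0 ≤ x i) (hi : p < i) :
    greedyPoint x v i = 0 := by
  have htail : ∑ j ∈ Ici i, x j ≤ v :=
    (sum_le_sum_of_subset_of_nonneg
      (fun _ hj => mem_Ioi.2 (hi.trans_le (mem_Ici.1 hj))) fun j _ _ => hx j).trans hp.1
  rw [greedyPoint, max_eq_right (sub_nonpos.2 htail), min_eq_left (hx i)]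

theorem greedyPoint_self (hp : IsPivot x v p) : greedyPoint x v p = ∑ j ∈ Ici p, x j - v := by
  rw [greedyPoint, max_eq_left (sub_nonneg.2 hp.2.le), min_eq_left]
  rw [← add_sum_Ioi_eq_sum_Ici, add_sub_assoc]
  exact add_le_of_nonpos_right (sub_nonpos.2 hp.1)

theorem sum_greedyPoint [Fintype ι] (hp : IsPivot x v p) (hx : ∀ i, 0 ≤ x i) :
    ∑ i, greedyPoint x v i = ∑ i, x i - v := by
  have hbelow : ∑ i ∈ (Ici p)ᶜ, greedyPoint x v i = ∑ i ∈ (Ici p)ᶜ, x i :=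
    sum_congr rfl fun i hi => hp.greedyPoint_of_lt hx (by simpa using hi)
  have habove : ∑ i ∈ Ioi p, greedyPoint x v i = 0 :=
    sum_eq_zero fun i hi => hp.greedyPoint_of_gt hx (mem_Ioi.1 hi)
  calc ∑ i, greedyPoint x v i
      = greedyPoint x v p + ∑ i ∈ Ioi p, greedyPoint x v i
          + ∑ i ∈ (Ici p)ᶜ, greedyPoint x v i := by
        rw [add_sum_Ioi_eq_sum_Ici, sum_add_sum_compl]
    _ = (∑ i ∈ Ici p, x i - v) + ∑ i ∈ (Ici p)ᶜ, x i := by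
        rw [hp.greedyPoint_self, habove, hbelow, add_zero]
    _ = ∑ i, x i - v := by
        rw [sub_add_eq_add_sub, sum_add_sum_compl]

theorem greedyPoint_mem_boxSlice [Fintype ι] (hp : IsPivot x v p) (hx : ∀ i, 0 ≤ x i) :
    greedyPoint x v ∈ boxSlice x v :=
  ⟨fun i => ⟨greedyPoint_nonneg v (hx i), greedyPoint_le x v i⟩, hp.sum_greedyPoint hx⟩

end IsPivot

end Greedy

theorem greedyPoint_fin {G : Type*} [AddCommGroup G] [LinearOrder G] [IsOrderedAddMonoid G] {n : ℕ}
    {x : Fin n → G} {v : G} {i : Fin n} (hv : 0 ≤ v) (hx : 0 ≤ x i) :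
    greedyPoint x v i = if (i : ℕ) + 1 = n then max (x i - v) 0
      else min (max ((∑ j ∈ Ici i, x j) - v) 0) (x i) := by
  split_ifs with hi
  · exact greedyPoint_of_isMax hv hx fun j _ => Fin.le_def.2 (by lia)
  · rfl

theorem stmt15_general {ι R : Type*} [Fintype ι] [LinearOrder ι] [LocallyFiniteOrderTop ι]
    [Ring R] [LinearOrder R] [IsStrictOrderedRing R] {β x : ι → R} {v : R} (hβ : StrictMono β)
    (hv : 0 ≤ v) (hx : ∀ i, 0 ≤ x i) (hsum : v < ∑ i, x i) :
    greedyPoint x v ∈ boxSlice x v ∧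
      ∀ y ∈ boxSlice x v, y ≠ greedyPoint x v →
        ∑ i, β i * greedyPoint x v i < ∑ i, β i * y i := by
  obtain ⟨p, hp⟩ := exists_isPivot hv hsum
  refine ⟨hp.greedyPoint_mem_boxSlice hx, fun y hy hne => ?_⟩
  exact sum_mul_lt_sum_mul_of_crossing hβ (hy.2.trans (hp.sum_greedyPoint hx).symm) hne
    (fun i hi => (hy.1 i).2.trans_eq (hp.greedyPoint_of_lt hx hi).symm)
    (fun i hi => (hp.greedyPoint_of_gt hx hi).trans_le (hy.1 i).1)

/-- for `0 < β₁ < ⋯ < βₙ`, `v* ≥ 0` and `x ∈ ℝ₊ⁿ` with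
`Σ xⱼ > v*`, the linear function `y ↦ Σ βᵢ yᵢ` has a unique minimizer on
`{y : 0 ≤ y ≤ x, Σ yᵢ = Σ xᵢ − v*}`, given by
`y*ᵢ = min( (Σ_{j≥i} xⱼ − v*)₊ , xᵢ )` for `i < n` and `y*ₙ = (xₙ − v*)₊`. -/
theorem stmt15 (n : ℕ) (β : Fin n → ℝ) (hβpos : ∀ i, 0 < β i) (hβ : StrictMono β)
    (v : ℝ) (hv : 0 ≤ v) (x : Fin n → ℝ) (hx : ∀ i, 0 ≤ x i)
    (hsum : v < ∑ i, x i)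
    (ys : Fin n → ℝ)
    (hys : ∀ i : Fin n, ys i =
      if (i : ℕ) + 1 = n then max (x i - v) 0
      else min (max ((∑ j ∈ Finset.Ici i, x j) - v) 0) (x i)) :
    ((∀ i, 0 ≤ ys i ∧ ys i ≤ x i) ∧ ∑ i, ys i = ∑ i, x i - v) ∧
    ∀ y : Fin n → ℝ, ((∀ i, 0 ≤ y i ∧ y i ≤ x i) ∧ ∑ i, y i = ∑ i, x i - v) →
      y ≠ ys → ∑ i, β i * ys i < ∑ i, β i * y i := by
  obtain rfl : ys = greedyPoint x v :=
    funext fun i => (hys i).trans (greedyPoint_fin hv (hx i)).symm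
  exact stmt15_general hβ hv hx hsum
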